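/- arXiv:2310.01822 — 2 statements merged into one kernel-verified Lean document; each statement's English description precedes it below -/
import Mathlib

section
/- There is a constant C ∈ ℕ such that ex(n,B) ≤ (9/8)·binom(n,2) + (21/16)·n + C for every n ≥ 5. -/
open Finset

/-- `E` is the edge set of a simplicial complex: it is closed under taking subsets. -/
def IsComplex {α : Type*} [DecidableEq α] (E : Finset (Finset α)) : Prop :=
  ∀ e ∈ E, ∀ f ⊆ e, f ∈ E

/-- `H` contains a copy of `F`: an injection of the vertices mapping edges to edges. -/
def HasCopy {α β : Type*} [DecidableEq β]
    (F : Finset (Finset α)) (H : Finset (Finset β)) : Prop :=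
  ∃ f : α → β, Function.Injective f ∧ ∀ e ∈ F, e.image f ∈ H

/-- downward closure of a family of sets -/
def dClosure {α : Type*} [DecidableEq α] (S : Finset (Finset α)) : Finset (Finset α) :=
  S.biUnion Finset.powerset

/-- `ex(n,F)`: the extremal number for simplicial complexes -/
noncomputable def exSC {α : Type*} (n : ℕ) (F : Finset (Finset α)) : ℕ :=
  sSup {m | ∃ E : Finset (Finset (Fin n)), IsComplex E ∧ ¬ HasCopy F E ∧ E.card = m}

/-- `ex^(k)(n,F)`: the extremal number for `k`-uniform hypergraphs -/
noncomputable def exUnif {α : Type*} (k n : ℕ) (F : Finset (Finset α)) : ℕ :=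
  sSup {m | ∃ E : Finset (Finset (Fin n)),
    (∀ e ∈ E, e.card = k) ∧ ¬ HasCopy F E ∧ E.card = m}

/-- the complex `B`: downward closure of `{{v3,v4},{v1,v2,v3},{v1,v4,v5}}`
(vertices `v1,…,v5` are `0,…,4`) -/
def B : Finset (Finset (Fin 5)) :=
  dClosure {{2, 3}, {0, 1, 2}, {0, 3, 4}}

/-!
If `uc` and `vd` are disjoint edges of the link graph of `y` in a `B`-free complex, then `uv` is
not a 2-edge. In particular link graphs contain no path on four vertices, so their nontrivial
components are stars and triangles.

If the link graph of `a` contains a triangle `T`, at most `4 n` edges meet the four-set `T ∪ {a}`,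
few enough to delete them and induct on the vertex set. Otherwise every component of a link graph
is a star, so every 3-edge contains at least two pairs that lie in no other 3-edge. Let `W` be a
largest set inducing a matching in the graph of 2-edges. Each 3-edge can be charged to two pairs
`(y, u)` with `y ∉ W` such that no pair is charged twice and the vertices `u` belonging to one `y`
again induce a matching. Hence twice the number of 3-edges is at most `|W| (n - |W|)`, while at
most `|W| / 2` pairs inside `W` are 2-edges; maximizing over `|W|` gives the bound.
-/

open scoped FinsetFamily

section Graphs

variable {α : Type*} [DecidableEq α] {E : Finset (Finset α)}

/-- The graph of the 2-edges of `E`. -/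
def skeletonGraph (E : Finset (Finset α)) : SimpleGraph α where
  Adj u v := u ≠ v ∧ {u, v} ∈ E
  symm := ⟨fun u v h => ⟨h.1.symm, pair_comm u v ▸ h.2⟩⟩
  loopless := ⟨fun _ h => h.1 rfl⟩

/-- The graph of the pairs `uv` that form a 3-edge of `E` together with `y`; here `y` itself is
an isolated vertex. -/
def linkGraph (E : Finset (Finset α)) (y : α) : SimpleGraph α where
  Adj u v := y ≠ u ∧ y ≠ v ∧ u ≠ v ∧ {y, u, v} ∈ E
  symm := ⟨fun u v h => ⟨h.2.1, h.1, h.2.2.1.symm, pair_comm u v ▸ h.2.2.2⟩⟩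
  loopless := ⟨fun _ h => h.2.2.1 rfl⟩

lemma linkGraph_adj_swap {a b c : α} (h : (linkGraph E a).Adj b c) : (linkGraph E b).Adj a c :=
  ⟨h.1.symm, h.2.2.1, h.2.1, insert_comm a b {c} ▸ h.2.2.2⟩

lemma linkGraph_adj_rotate {a b c : α} (h : (linkGraph E a).Adj b c) : (linkGraph E b).Adj c a :=
  (linkGraph_adj_swap h).symm

lemma IsComplex.skeletonGraph_adj (hE : IsComplex E) {e : Finset α} (he : e ∈ E) {a b : α}
    (ha : a ∈ e) (hb : b ∈ e) (hab : a ≠ b) : (skeletonGraph E).Adj a b :=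
  ⟨hab, hE e he _ (by simp [insert_subset_iff, ha, hb])⟩

lemma IsComplex.linkGraph_adj (hE : IsComplex E) {e : Finset α} (he : e ∈ E) {a b c : α}
    (ha : a ∈ e) (hb : b ∈ e) (hc : c ∈ e) (hab : a ≠ b) (hac : a ≠ c) (hbc : b ≠ c) :
    (linkGraph E a).Adj b c :=
  ⟨hab, hac, hbc, hE e he _ (by simp [insert_subset_iff, ha, hb, hc])⟩

lemma IsComplex.linkGraph_le_skeletonGraph (hE : IsComplex E) (y : α) :
    linkGraph E y ≤ skeletonGraph E :=
  fun _ _ h => hE.skeletonGraph_adj h.2.2.2 (by simp) (by simp) h.2.2.1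

lemma IsComplex.skeletonGraph_adj_of_linkGraph_adj (hE : IsComplex E) {a b c : α}
    (h : (linkGraph E a).Adj b c) : (skeletonGraph E).Adj a b :=
  hE.linkGraph_le_skeletonGraph c (linkGraph_adj_swap h.symm)

lemma HasCopy.mono {β : Type*} {F : Finset (Finset β)} {D : Finset (Finset α)} (hDE : D ⊆ E)
    (h : HasCopy F D) : HasCopy F E :=
  let ⟨f, hf, hmem⟩ := h
  ⟨f, hf, fun e he => hDE (hmem e he)⟩

/-- The pair `yu` lies in at most one 3-edge of `E`. -/
def IsThin (E : Finset (Finset α)) (y u : α) : Prop :=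
  ((linkGraph E y).neighborSet u).Subsingleton

lemma IsThin.symm {y u : α} (h : IsThin E y u) : IsThin E u y :=
  fun _ hc _ hd => h (linkGraph_adj_swap hc) (linkGraph_adj_swap hd)

/-- The subgraph of `G` induced on `W` has maximum degree at most one. -/
def InducesMatching (G : SimpleGraph α) (W : Set α) : Prop :=
  ∀ u ∈ W, (G.neighborSet u ∩ W).Subsingleton

end Graphs

section LinksInFreeComplexes

variable {α : Type*} [DecidableEq α] {E : Finset (Finset α)}

lemma hasCopy_B (hE : IsComplex E) {y u c v d : α} (huc : (linkGraph E y).Adj u c)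
    (hvd : (linkGraph E y).Adj v d) (huv : (skeletonGraph E).Adj u v) (hud : u ≠ d) (hcv : c ≠ v)
    (hcd : c ≠ d) : HasCopy B E := by
  have hinj : Function.Injective ![y, c, u, v, d] := by
    have hyu := huc.1
    have hyc := huc.2.1
    have huc' := huc.ne
    have hyv := hvd.1
    have hyd := hvd.2.1
    have hvd' := hvd.ne
    have huv' := huv.ne
    intro i j hij
    fin_cases i <;> fin_cases j <;> simp_all
  refine ⟨![y, c, u, v, d], hinj, fun e he => ?_⟩
  simp only [B, dClosure, mem_biUnion, mem_powerset] at he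
  obtain ⟨s, hs, hes⟩ := he
  refine hE (s.image ![y, c, u, v, d]) ?_ _ (image_subset_image hes)
  simp only [mem_insert, mem_singleton] at hs
  rcases hs with rfl | rfl | rfl
  · simpa [image_insert] using huv.2
  · simpa [image_insert] using huc.symm.2.2.2
  · simpa [image_insert] using hvd.2.2.2

lemma eq_or_eq_or_eq_of_skeletonGraph_adj (hE : IsComplex E) (hB : ¬ HasCopy B E) {y u c v d : α}
    (huc : (linkGraph E y).Adj u c) (hvd : (linkGraph E y).Adj v d)
    (huv : (skeletonGraph E).Adj u v) : u = d ∨ c = v ∨ c = d := by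
  by_contra! h
  exact hB (hasCopy_B hE huc hvd huv h.1 h.2.1 h.2.2)

lemma isThin_or_neighborSet_subset_pair (hE : IsComplex E) (hB : ¬ HasCopy B E) {y u v : α}
    (huv : (linkGraph E y).Adj u v) :
    IsThin E y u ∨
      ∃ w, (linkGraph E y).Adj u w ∧ (linkGraph E y).neighborSet v ⊆ {u, w} := by
  by_cases h : ∃ w, (linkGraph E y).Adj u w ∧ w ≠ v
  · obtain ⟨w, huw, hwv⟩ := h
    refine Or.inr ⟨w, huw, fun z hvz => ?_⟩
    rcases eq_or_eq_or_eq_of_skeletonGraph_adj hE hB huw hvz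
      (hE.linkGraph_le_skeletonGraph y huv) with rfl | rfl | rfl
    · simp
    · exact absurd rfl hwv
    · simp
  · push Not at h
    exact Or.inl fun w hw z hz => (h w hw).trans (h z hz).symm

lemma exists_neighborSet_subset_pair (hE : IsComplex E) (hB : ¬ HasCopy B E) {y u v : α}
    (huv : (linkGraph E y).Adj u v) :
    (∃ p q, (linkGraph E y).neighborSet u ⊆ {p, q}) ∨
      ∃ p q, (linkGraph E y).neighborSet v ⊆ {p, q} := by
  rcases isThin_or_neighborSet_subset_pair hE hB huv with hthin | ⟨w, -, hw⟩
  · exact Or.inl ⟨v, v, fun w hw => by simp [hthin hw huv]⟩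
  · exact Or.inr ⟨u, w, hw⟩

lemma isThin_or_isThin (hE : IsComplex E) (hB : ¬ HasCopy B E) {y u v : α}
    (hfree : (linkGraph E y).CliqueFree 3) (huv : (linkGraph E y).Adj u v) :
    IsThin E y u ∨ IsThin E y v := by
  rcases isThin_or_neighborSet_subset_pair hE hB huv with hthin | ⟨w, huw, hw⟩
  · exact Or.inl hthin
  · have hwv : ¬ (linkGraph E y).Adj v w := fun hvw =>
      hfree {u, v, w} (SimpleGraph.is3Clique_triple_iff.2 ⟨huv, huw, hvw⟩)
    have hvu : ∀ z, (linkGraph E y).Adj v z → z = u := fun z hz =>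
      (hw hz).resolve_right fun hzw => hwv (hzw ▸ hz)
    exact Or.inr fun z hz z' hz' => (hvu z hz).trans (hvu z' hz').symm

end LinksInFreeComplexes

lemma card_slice_le_choose {α : Type*} {E : Finset (Finset α)} {V : Finset α}
    (hV : ∀ e ∈ E, e ⊆ V) (r : ℕ) : #(E # r) ≤ (#V).choose r := by
  rw [← card_powersetCard]
  exact card_le_card fun e he =>
    mem_powersetCard.2 ⟨hV e (mem_slice.1 he).1, (mem_slice.1 he).2⟩

lemma card_le_of_forall_card_le_three {α : Type*} {E : Finset (Finset α)} {V : Finset α}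
    (hV : ∀ e ∈ E, e ⊆ V) (h : ∀ e ∈ E, #e ≤ 3) : #E ≤ 1 + #V + #(E # 2) + #(E # 3) := by
  have h0 : #(E # 0) ≤ 1 := by simpa using card_slice_le_choose hV 0
  have h1 : #(E # 1) ≤ #V := by simpa using card_slice_le_choose hV 1
  calc #E = ∑ r ∈ range 4, #(E # r) := card_eq_sum_card_fiberwise fun e he =>
        mem_coe.2 (mem_range.2 (Nat.lt_succ_of_le (h e he)))
    _ = #(E # 0) + #(E # 1) + #(E # 2) + #(E # 3) := by simp [sum_range_succ]
    _ ≤ 1 + #V + #(E # 2) + #(E # 3) := by gcongr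

section TriangleFreeLinks

variable {α : Type*} [DecidableEq α] {E : Finset (Finset α)}

lemma card_le_three_of_linkGraph_cliqueFree (hE : IsComplex E)
    (hfree : ∀ y, (linkGraph E y).CliqueFree 3) {e : Finset α} (he : e ∈ E) : #e ≤ 3 := by
  by_contra! h
  obtain ⟨y, hy⟩ := card_pos.1 (by omega : 0 < #e)
  obtain ⟨T, hTe, hT⟩ : ∃ T ⊆ e.erase y, #T = 3 :=
    exists_subset_card_eq (by rw [card_erase_of_mem hy]; omega)
  refine hfree y T ⟨fun u hu v hv huv => ?_, hT⟩
  have hu' := mem_erase.1 (hTe hu)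
  have hv' := mem_erase.1 (hTe hv)
  exact hE.linkGraph_adj he hy hu'.2 hv'.2 hu'.1.symm hv'.1.symm huv

lemma exists_isThin_isThin (hE : IsComplex E) (hB : ¬ HasCopy B E)
    (hfree : ∀ y, (linkGraph E y).CliqueFree 3) {e : Finset α} (he : e ∈ E # 3) :
    ∃ x y z, e = {x, y, z} ∧ (linkGraph E z).Adj x y ∧ IsThin E z x ∧ IsThin E z y := by
  obtain ⟨heE, he3⟩ := mem_slice.1 he
  obtain ⟨a, b, c, hab, hac, hbc, rfl⟩ := card_eq_three.1 he3
  have ha : (linkGraph E a).Adj b c := ⟨hab, hac, hbc, heE⟩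
  have hb : (linkGraph E b).Adj c a := linkGraph_adj_rotate ha
  have hc : (linkGraph E c).Adj a b := linkGraph_adj_rotate hb
  rcases isThin_or_isThin hE hB (hfree a) ha with hthin | hthin
  · rcases isThin_or_isThin hE hB (hfree c) hc with hthin' | hthin'
    · exact ⟨b, c, a, by grind, ha, hthin, hthin'.symm⟩
    · exact ⟨c, a, b, by grind, hb, hthin'.symm, hthin.symm⟩
  · rcases isThin_or_isThin hE hB (hfree b) hb with hthin' | hthin'
    · exact ⟨a, b, c, rfl, hc, hthin.symm, hthin'.symm⟩
    · exact ⟨b, c, a, by grind, ha, hthin'.symm, hthin⟩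

/-- The 3-edge `e` is charged to the ordered pair `(y, u)`, where `y ∉ W`. The charges are chosen
so that every pair receives at most one 3-edge, every 3-edge is charged at least twice, and the
vertices `u` charged together with a fixed `y` induce a matching. -/
def IsChargedTo (E : Finset (Finset α)) (W e : Finset α) (y u : α) : Prop :=
  y ∉ W ∧ ∃ c, e = {y, u, c} ∧ (linkGraph E y).Adj u c ∧
    (u ∈ W ∧ (c ∈ W ∨ IsThin E y u) ∨ IsThin E y u ∧ IsThin E y c)

lemma IsChargedTo.eq (hE : IsComplex E) {W e f : Finset α}
    (hW : InducesMatching (skeletonGraph E) ↑W) {y u : α} (he : IsChargedTo E W e y u)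
    (hf : IsChargedTo E W f y u) : e = f := by
  obtain ⟨-, c, rfl, hyuc, hc⟩ := he
  obtain ⟨-, d, rfl, hyud, hd⟩ := hf
  suffices hcd : c = d by rw [hcd]
  by_cases hthin : IsThin E y u
  · exact hthin hyuc hyud
  · have hmem : u ∈ W ∧ c ∈ W ∧ d ∈ W := by tauto
    exact hW u hmem.1 ⟨hE.linkGraph_le_skeletonGraph y hyuc, hmem.2.1⟩
      ⟨hE.linkGraph_le_skeletonGraph y hyud, hmem.2.2⟩

lemma exists_isChargedTo_isChargedTo (hE : IsComplex E) (hB : ¬ HasCopy B E)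
    (hfree : ∀ y, (linkGraph E y).CliqueFree 3) {W : Finset α}
    (hW : InducesMatching (skeletonGraph E) ↑W) {e : Finset α} (he : e ∈ E # 3) :
    ∃ p q : Σ _ : α, α, p ≠ q ∧ IsChargedTo E W e p.1 p.2 ∧ IsChargedTo E W e q.1 q.2 := by
  obtain ⟨x, y, z, rfl, hz, hzx, hzy⟩ := exists_isThin_isThin hE hB hfree he
  have hx : (linkGraph E x).Adj y z := linkGraph_adj_rotate hz
  have hy : (linkGraph E y).Adj z x := linkGraph_adj_rotate hx
  by_cases hzW : z ∈ W
  · by_cases hxW : x ∈ W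
    · have hyW : y ∉ W := fun hyW => hx.ne (hW x hxW
        ⟨hE.skeletonGraph_adj_of_linkGraph_adj hx, hyW⟩
        ⟨hE.skeletonGraph_adj_of_linkGraph_adj hx.symm, hzW⟩)
      exact ⟨⟨y, z⟩, ⟨y, x⟩, by simp [hy.ne],
        ⟨hyW, x, by grind, hy, .inl ⟨hzW, .inl hxW⟩⟩,
        ⟨hyW, z, by grind, hy.symm, .inl ⟨hxW, .inl hzW⟩⟩⟩
    · by_cases hyW : y ∈ W
      · exact ⟨⟨x, z⟩, ⟨x, y⟩, by simp [hx.ne'],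
          ⟨hxW, y, by grind, hx.symm, .inl ⟨hzW, .inl hyW⟩⟩,
          ⟨hxW, z, by grind, hx, .inl ⟨hyW, .inl hzW⟩⟩⟩
      · exact ⟨⟨x, z⟩, ⟨y, z⟩, by simp [hz.ne],
          ⟨hxW, y, by grind, hx.symm, .inl ⟨hzW, .inr hzx.symm⟩⟩,
          ⟨hyW, x, by grind, hy, .inl ⟨hzW, .inr hzy.symm⟩⟩⟩
  · exact ⟨⟨z, x⟩, ⟨z, y⟩, by simp [hz.ne],
      ⟨hzW, y, by grind, hz, .inr ⟨hzx, hzy⟩⟩,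
      ⟨hzW, x, by grind, hz.symm, .inr ⟨hzy, hzx⟩⟩⟩

lemma eq_of_isolated_link_edge (hE : IsComplex E) (hB : ¬ HasCopy B E) {y u c v d : α}
    (huc : (linkGraph E y).Adj u c) (hu : IsThin E y u) (hc : IsThin E y c)
    (hvd : (linkGraph E y).Adj v d) (huv : (skeletonGraph E).Adj u v) : v = c := by
  rcases eq_or_eq_or_eq_of_skeletonGraph_adj hE hB huc hvd huv with rfl | rfl | rfl
  · exact hu hvd.symm huc
  · rfl
  · exact absurd (hc huc.symm hvd.symm) huv.ne

lemma inducesMatching_isChargedTo (hE : IsComplex E) (hB : ¬ HasCopy B E) {W : Finset α}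
    (hW : InducesMatching (skeletonGraph E) ↑W) (y : α) :
    InducesMatching (skeletonGraph E) {u | ∃ e, IsChargedTo E W e y u} := by
  rintro u ⟨-, -, c, -, huc, hu⟩ v ⟨huv, -, -, d, -, hvd, hv⟩ v' ⟨huv', -, -, d', -, hvd', hv'⟩
  by_cases hiso : ∃ b, (linkGraph E y).Adj u b ∧ IsThin E y u ∧ IsThin E y b
  · obtain ⟨b, hub, hthin, hthin'⟩ := hiso
    rw [eq_of_isolated_link_edge hE hB hub hthin hthin' hvd huv,
      eq_of_isolated_link_edge hE hB hub hthin hthin' hvd' huv']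
  · have mem_of_adj {w b : α} (huw : (skeletonGraph E).Adj u w) (hwb : (linkGraph E y).Adj w b)
        (hw : w ∈ W ∧ (b ∈ W ∨ IsThin E y w) ∨ IsThin E y w ∧ IsThin E y b) : w ∈ W := by
      refine hw.elim And.left fun ⟨hthin, hthin'⟩ => absurd ?_ hiso
      obtain rfl := eq_of_isolated_link_edge hE hB hwb hthin hthin' huc huw.symm
      exact ⟨w, hwb.symm, hthin', hthin⟩
    have huW : u ∈ W := hu.elim And.left fun h => absurd ⟨c, huc, h⟩ hiso
    exact hW u huW ⟨huv, mem_of_adj huv hvd hv⟩ ⟨huv', mem_of_adj huv' hvd' hv'⟩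

open Classical in
lemma two_mul_card_slice_three_le (hE : IsComplex E) (hB : ¬ HasCopy B E)
    (hfree : ∀ y, (linkGraph E y).CliqueFree 3) {V W : Finset α} (hV : ∀ e ∈ E, e ⊆ V)
    (hW : InducesMatching (skeletonGraph E) ↑W)
    (hmax : ∀ S ⊆ V, InducesMatching (skeletonGraph E) ↑S → #S ≤ #W) :
    #(E # 3) * 2 ≤ #(V \ W) * #W := by
  let S (y : α) : Finset α := {u ∈ V | ∃ e, IsChargedTo E W e y u}
  let r (e : Finset α) (p : Σ _ : α, α) : Prop := IsChargedTo E W e p.1 p.2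
  have card_S_le (y : α) : #(S y) ≤ #W := hmax _ (filter_subset _ _) fun u hu =>
    (inducesMatching_isChargedTo hE hB hW y u (mem_filter.1 hu).2).anti fun v hv =>
      ⟨hv.1, (mem_filter.1 hv.2).2⟩
  have mem_sigma_S {e : Finset α} {p : Σ _ : α, α} (hp : IsChargedTo E W e p.1 p.2) :
      p ∈ (V \ W).sigma S := by
    obtain ⟨hpW, c, -, hadj, -⟩ := id hp
    exact mem_sigma.2 ⟨mem_sdiff.2 ⟨hV _ hadj.2.2.2 (by simp), hpW⟩,
      mem_filter.2 ⟨hV _ hadj.2.2.2 (by simp), e, hp⟩⟩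
  have two_le_charges : ∀ e ∈ E # 3, 2 ≤ #(((V \ W).sigma S).bipartiteAbove r e) := by
    intro e he
    obtain ⟨p, q, hpq, hp, hq⟩ := exists_isChargedTo_isChargedTo hE hB hfree hW he
    exact one_lt_card.2 ⟨p, (mem_bipartiteAbove r).2 ⟨mem_sigma_S hp, hp⟩,
      q, (mem_bipartiteAbove r).2 ⟨mem_sigma_S hq, hq⟩, hpq⟩
  have charges_le_one : ∀ p ∈ (V \ W).sigma S, #((E # 3).bipartiteBelow r p) ≤ 1 :=
    fun p _ => card_le_one.2 fun e he f hf =>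
      IsChargedTo.eq hE hW ((mem_bipartiteBelow r).1 he).2 ((mem_bipartiteBelow r).1 hf).2
  calc #(E # 3) * 2 ≤ #((V \ W).sigma S) * 1 :=
        card_mul_le_card_mul r two_le_charges charges_le_one
    _ = ∑ y ∈ V \ W, #(S y) := by rw [mul_one, card_sigma]
    _ ≤ #(V \ W) * #W := sum_le_card_nsmul _ _ _ fun y _ => card_S_le y

lemma exists_skeletonGraph_adj_of_mem_slice_two {e : Finset α} (he : e ∈ E # 2) {w : α}
    (hw : w ∈ e) : ∃ x, (skeletonGraph E).Adj w x ∧ e = {w, x} := by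
  obtain ⟨heE, he2⟩ := mem_slice.1 he
  obtain ⟨x, hx⟩ := card_eq_one.1 (by rw [card_erase_of_mem hw, he2] : #(e.erase w) = 1)
  obtain rfl : e = {w, x} := by rw [← insert_erase hw, hx]
  have hxw : x ∈ ({w, x} : Finset α).erase w := by simp [hx]
  exact ⟨x, ⟨(ne_of_mem_erase hxw).symm, heE⟩, rfl⟩

lemma two_mul_card_slice_two_subset_le {W : Finset α}
    (hW : InducesMatching (skeletonGraph E) ↑W) : 2 * #{e ∈ E # 2 | e ⊆ W} ≤ #W := by
  have hdisj : Set.PairwiseDisjoint ↑{e ∈ E # 2 | e ⊆ W} (id : Finset α → Finset α) := by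
    intro e heW f hfW hef
    obtain ⟨he, heW⟩ := mem_filter.1 heW
    obtain ⟨hf, hfW⟩ := mem_filter.1 hfW
    refine disjoint_left.2 fun w hwe hwf => hef ?_
    obtain ⟨x, hwx, rfl⟩ := exists_skeletonGraph_adj_of_mem_slice_two he hwe
    obtain ⟨y, hwy, rfl⟩ := exists_skeletonGraph_adj_of_mem_slice_two hf hwf
    rw [hW w (heW hwe) ⟨hwx, heW (by simp)⟩ ⟨hwy, hfW (by simp)⟩]
  calc 2 * #{e ∈ E # 2 | e ⊆ W} = ∑ e ∈ E # 2 with e ⊆ W, #e := by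
        rw [sum_const_nat fun e he => (mem_slice.1 (mem_filter.1 he).1).2, mul_comm]
    _ = #({e ∈ E # 2 | e ⊆ W}.biUnion id) := (card_biUnion hdisj).symm
    _ ≤ #W := card_le_card (biUnion_subset.2 fun e he => (mem_filter.1 he).2)

lemma card_slice_two_add_choose_le {V W : Finset α} (hV : ∀ e ∈ E, e ⊆ V) (hWV : W ⊆ V) :
    #(E # 2) + (#W).choose 2 ≤ (#V).choose 2 + #{e ∈ E # 2 | e ⊆ W} := by
  have hsub : {e ∈ E # 2 | ¬ e ⊆ W} ⊆ powersetCard 2 V \ powersetCard 2 W := fun e he => by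
    obtain ⟨he, heW⟩ := mem_filter.1 he
    rw [mem_sdiff, mem_powersetCard, mem_powersetCard]
    exact ⟨⟨hV e (mem_slice.1 he).1, (mem_slice.1 he).2⟩, fun h => heW h.1⟩
  have hcard := card_le_card hsub
  rw [card_sdiff_of_subset (powersetCard_mono hWV), card_powersetCard, card_powersetCard] at hcard
  have hsplit := card_filter_add_card_filter_not (s := E # 2) (· ⊆ W)
  have hchoose := Nat.choose_le_choose 2 (card_le_card hWV)
  omega

open Classical in
lemma card_le_of_linkGraph_cliqueFree (hE : IsComplex E) (hB : ¬ HasCopy B E)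
    (hfree : ∀ y, (linkGraph E y).CliqueFree 3) {V : Finset α} (hV : ∀ e ∈ E, e ⊆ V) :
    (#E : ℝ) ≤ 9 / 16 * (#V : ℝ) ^ 2 + 3 / 4 * #V + 5 / 4 := by
  obtain ⟨W, hWmem, hmax⟩ := exists_max_image
    (V.powerset.filter fun S : Finset α => InducesMatching (skeletonGraph E) ↑S) card
    ⟨∅, by simp [InducesMatching]⟩
  simp only [mem_filter, mem_powerset, and_imp] at hWmem hmax
  obtain ⟨hWV, hW⟩ := hWmem
  have hcard := card_le_of_forall_card_le_three hV fun e he =>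
    card_le_three_of_linkGraph_cliqueFree hE hfree he
  have h2 := card_slice_two_add_choose_le hV hWV
  have h2W := two_mul_card_slice_two_subset_le hW
  have h3 := two_mul_card_slice_three_le hE hB hfree hV hW hmax
  rw [card_sdiff_of_subset hWV] at h3
  rify [card_le_card hWV] at hcard h2 h2W h3
  rw [Nat.cast_choose_two, Nat.cast_choose_two] at h2
  -- For fixed `#V` the resulting bound is a concave quadratic in `#W`, maximal at
  -- `#W = (#V + 2) / 4`.
  nlinarith [sq_nonneg ((#V : ℝ) + 2 - 4 * #W)]

end TriangleFreeLinks

lemma exists_mem_ne_ne_of_isNClique_three {α : Type*} {G : SimpleGraph α} {T : Finset α}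
    (hT : G.IsNClique 3 T) (x y : α) : ∃ z ∈ T, z ≠ x ∧ z ≠ y := by
  classical
  obtain ⟨z, hz, hzxy⟩ : ∃ z ∈ T, z ∉ ({x, y} : Finset α) :=
    exists_mem_notMem_of_card_lt_card (card_le_two.trans_lt (by simp [hT.card_eq]))
  exact ⟨z, hz, by simpa using hzxy⟩

section LinkTriangles

variable {α : Type*} [DecidableEq α] {E : Finset (Finset α)}

/-- `K` is detached in `E` if a vertex `u ∉ K` that lies in a 3-edge with some `k ∈ K` is adjacent
to no other vertex of `K`. -/
def IsDetached (E : Finset (Finset α)) (K : Finset α) : Prop :=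
  ∀ k ∈ K, ∀ k' ∈ K, k ≠ k' → ∀ u ∉ K, ∀ v, (linkGraph E k).Adj u v →
    ¬ (skeletonGraph E).Adj k' u

lemma exists_linkGraph_adj_of_isNClique_three {a : α} {T : Finset α}
    (hT : (linkGraph E a).IsNClique 3 T) {k k' : α} (hk : k ∈ insert a T)
    (hk' : k' ∈ insert a T) (hkk' : k ≠ k') : ∃ p ∈ insert a T, (linkGraph E k).Adj k' p := by
  rcases mem_insert.1 hk with rfl | hkT
  · have hk'T := mem_of_mem_insert_of_ne hk' hkk'.symm
    obtain ⟨p, hp, hpk', -⟩ := exists_mem_ne_ne_of_isNClique_three hT k' k'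
    exact ⟨p, mem_insert_of_mem hp, hT.isClique hk'T hp hpk'.symm⟩
  rcases mem_insert.1 hk' with rfl | hk'T
  · obtain ⟨p, hp, hpk, -⟩ := exists_mem_ne_ne_of_isNClique_three hT k k
    exact ⟨p, mem_insert_of_mem hp, linkGraph_adj_swap (hT.isClique hkT hp hpk.symm)⟩
  · exact ⟨a, mem_insert_self a T, linkGraph_adj_rotate (hT.isClique hkT hk'T hkk')⟩

lemma not_linkGraph_adj_of_isNClique_three (hE : IsComplex E) (hB : ¬ HasCopy B E) {a : α}
    {T : Finset α} (hT : (linkGraph E a).IsNClique 3 T) {k k' u : α} (hk : k ∈ insert a T)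
    (hk' : k' ∈ insert a T) (hu : u ∉ insert a T) : ¬ (linkGraph E k).Adj k' u := by
  have hua : u ≠ a := fun h => hu (h ▸ mem_insert_self a T)
  have huT {x : α} (hx : x ∈ T) : u ≠ x := fun h => hu (h ▸ mem_insert_of_mem hx)
  have not_adj_apex {x : α} (hx : x ∈ T) : ¬ (linkGraph E a).Adj x u := fun hxu => by
    obtain ⟨y, hy, hyx, -⟩ := exists_mem_ne_ne_of_isNClique_three hT x x
    obtain ⟨z, hz, hzx, hzy⟩ := exists_mem_ne_ne_of_isNClique_three hT x y
    have hxy := hE.linkGraph_le_skeletonGraph a (hT.isClique hx hy hyx.symm)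
    rcases eq_or_eq_or_eq_of_skeletonGraph_adj hE hB hxu (hT.isClique hy hz hzy.symm) hxy
      with h | h | h
    exacts [hzx h.symm, huT hy h, huT hz h]
  have not_adj_base {x y : α} (hx : x ∈ T) (hy : y ∈ T) : ¬ (linkGraph E x).Adj y u := fun hyu => by
    obtain ⟨z, hz, hzx, hzy⟩ := exists_mem_ne_ne_of_isNClique_three hT x y
    have haz := linkGraph_adj_swap (hT.isClique hx hz hzx.symm)
    have hya := (hE.skeletonGraph_adj_of_linkGraph_adj (hT.isClique hy hz hzy.symm)).symm
    rcases eq_or_eq_or_eq_of_skeletonGraph_adj hE hB hyu haz hya with h | h | h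
    exacts [hzy h.symm, hua h, huT hz h]
  intro hk'u
  rcases mem_insert.1 hk with rfl | hkT
  · exact not_adj_apex (mem_of_mem_insert_of_ne hk' hk'u.1.symm) hk'u
  rcases mem_insert.1 hk' with rfl | hk'T
  · exact not_adj_apex hkT (linkGraph_adj_swap hk'u)
  · exact not_adj_base hkT hk'T hk'u

lemma isDetached_insert_of_isNClique_three (hE : IsComplex E) (hB : ¬ HasCopy B E) {a : α}
    {T : Finset α} (hT : (linkGraph E a).IsNClique 3 T) : IsDetached E (insert a T) := by
  intro k hk k' hk' hkk' u hu v huv hk'u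
  have hv : v ∉ insert a T := fun hv =>
    not_linkGraph_adj_of_isNClique_three hE hB hT hk hv hu huv.symm
  obtain ⟨p, hp, hk'p⟩ := exists_linkGraph_adj_of_isNClique_three hT hk hk' hkk'
  rcases eq_or_eq_or_eq_of_skeletonGraph_adj hE hB hk'p huv hk'u with rfl | rfl | rfl
  exacts [hv hk', hu hp, hv hp]

open Classical in
/-- The edges that are charged to `u` when those meeting `K` are counted: an edge containing `u`
and `k ∈ K` is charged to `u` if it is `{k, u}` or if `ku` lies in at most two 3-edges. -/
noncomputable def chargedEdges (E : Finset (Finset α)) (K : Finset α) (u : α) :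
    Finset (Finset α) :=
  {e ∈ E | u ∈ e ∧ ∃ k ∈ K, k ∈ e ∧
    (e = {k, u} ∨ ∃ p q, (linkGraph E k).neighborSet u ⊆ {p, q})}

lemma mem_chargedEdges {K e : Finset α} {u : α} : e ∈ chargedEdges E K u ↔
    e ∈ E ∧ u ∈ e ∧ ∃ k ∈ K, k ∈ e ∧
      (e = {k, u} ∨ ∃ p q, (linkGraph E k).neighborSet u ⊆ {p, q}) := by
  simp [chargedEdges]

lemma card_chargedEdges_le_four_of_linkGraph_adj (hE : IsComplex E) {K : Finset α}
    (hK : IsDetached E K) {k u v : α} (hk : k ∈ K) (hu : u ∉ K) (huv : (linkGraph E k).Adj u v) :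
    #(chargedEdges E K u) ≤ 4 := by
  have charged {e : Finset α} (he : e ∈ chargedEdges E K u) :
      e ∈ E ∧ u ∈ e ∧ k ∈ e ∧ (e = {k, u} ∨ ∃ p q, (linkGraph E k).neighborSet u ⊆ {p, q}) := by
    obtain ⟨heE, hue, k', hk', hk'e, he⟩ := mem_chargedEdges.1 he
    obtain rfl : k = k' := by
      by_contra hne
      exact hK k hk k' hk' hne u hu v huv
        (hE.skeletonGraph_adj heE hk'e hue (ne_of_mem_of_not_mem hk' hu))
    exact ⟨heE, hue, hk'e, he⟩
  by_cases hpair : ∃ p q, (linkGraph E k).neighborSet u ⊆ {p, q}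
  · obtain ⟨p, q, hpq⟩ := hpair
    have hsub : chargedEdges E K u ⊆ Icc {k, u} ({k, u} ∪ {p, q}) := fun e he => by
      obtain ⟨heE, hue, hke, -⟩ := charged he
      refine mem_Icc.2 ⟨by simp [insert_subset_iff, hue, hke], fun x hx => ?_⟩
      by_cases hxku : x ∈ ({k, u} : Finset α)
      · exact mem_union_left _ hxku
      · have hxk : x ≠ k ∧ x ≠ u := by simpa using hxku
        have hux : x ∈ (linkGraph E k).neighborSet u :=
          hE.linkGraph_adj heE hke hue hx huv.1 hxk.1.symm hxk.2.symm
        exact mem_union_right _ (by simpa using hpq hux)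
    calc #(chargedEdges E K u) ≤ 2 ^ (#({k, u} ∪ {p, q}) - #{k, u}) :=
          (card_le_card hsub).trans_eq (card_Icc_finset subset_union_left)
      _ ≤ 2 ^ 2 := by
          gcongr
          · norm_num
          · have h := card_union_le {k, u} {p, q}
            have h' : #{p, q} ≤ 2 := card_le_two
            omega
  · have hsub : chargedEdges E K u ⊆ {{k, u}} := fun e he =>
      mem_singleton.2 ((charged he).2.2.2.resolve_right hpair)
    exact (card_le_card hsub).trans (by simp)

lemma card_chargedEdges_le_card_of_not_linkGraph_adj (hE : IsComplex E) {K : Finset α} {u : α}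
    (hu : u ∉ K) (h : ∀ k ∈ K, ∀ v, ¬ (linkGraph E k).Adj u v) : #(chargedEdges E K u) ≤ #K := by
  have hsub : chargedEdges E K u ⊆ K.image fun k => {k, u} := fun e he => by
    obtain ⟨heE, hue, k, hk, hke, -⟩ := mem_chargedEdges.1 he
    refine mem_image.2 ⟨k, hk, Subset.antisymm (by simp [insert_subset_iff, hue, hke]) ?_⟩
    intro x hx
    by_contra hxku
    have hxk : x ≠ k ∧ x ≠ u := by simpa using hxku
    exact h k hk x (hE.linkGraph_adj heE hke hue hx (ne_of_mem_of_not_mem hk hu) hxk.1.symm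
      hxk.2.symm)
  exact (card_le_card hsub).trans card_image_le

lemma exists_mem_chargedEdges (hE : IsComplex E) (hB : ¬ HasCopy B E) {K e : Finset α}
    (hK : IsDetached E K) (he : e ∈ E) (hKe : ¬ Disjoint K e) (heK : ¬ e ⊆ K) :
    ∃ u ∈ e, u ∉ K ∧ e ∈ chargedEdges E K u := by
  obtain ⟨k, hk, hke⟩ := not_disjoint_iff.1 hKe
  obtain ⟨u, hue, huK⟩ := not_subset.1 heK
  by_cases heku : e ⊆ {k, u}
  · have he_eq : e = {k, u} := heku.antisymm (by simp [insert_subset_iff, hke, hue])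
    exact ⟨u, hue, huK, mem_chargedEdges.2 ⟨he, hue, k, hk, hke, .inl he_eq⟩⟩
  obtain ⟨v, hve, hvku⟩ := not_subset.1 heku
  have hvne : v ≠ k ∧ v ≠ u := by simpa using hvku
  have huv : (linkGraph E k).Adj u v := hE.linkGraph_adj he hke hue hve
    (ne_of_mem_of_not_mem hk huK) hvne.1.symm hvne.2.symm
  have hvK : v ∉ K := fun hvK =>
    hK k hk v hvK hvne.1.symm u huK v huv (hE.linkGraph_le_skeletonGraph k huv).symm
  rcases exists_neighborSet_subset_pair hE hB huv with hpair | hpair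
  · exact ⟨u, hue, huK, mem_chargedEdges.2 ⟨he, hue, k, hk, hke, .inr hpair⟩⟩
  · exact ⟨v, hve, hvK, mem_chargedEdges.2 ⟨he, hve, k, hk, hke, .inr hpair⟩⟩

lemma card_filter_not_disjoint_le (hE : IsComplex E) (hB : ¬ HasCopy B E) {V K : Finset α}
    (hV : ∀ e ∈ E, e ⊆ V) (hK : IsDetached E K) (hK4 : #K ≤ 4) :
    #{e ∈ E | ¬ Disjoint K e} ≤ 2 ^ #K + #(V \ K) * 4 := by
  have hcover : {e ∈ E | ¬ Disjoint K e} ⊆ K.powerset ∪ (V \ K).biUnion (chargedEdges E K) := by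
    intro e he
    obtain ⟨he, hKe⟩ := mem_filter.1 he
    by_cases heK : e ⊆ K
    · exact mem_union_left _ (mem_powerset.2 heK)
    · obtain ⟨u, hue, huK, hu⟩ := exists_mem_chargedEdges hE hB hK he hKe heK
      exact mem_union_right _ (mem_biUnion.2 ⟨u, mem_sdiff.2 ⟨hV e he hue, huK⟩, hu⟩)
  have card_chargedEdges_le_four : ∀ u ∈ V \ K, #(chargedEdges E K u) ≤ 4 := by
    intro u hu
    have huK := (mem_sdiff.1 hu).2
    by_cases h : ∃ k ∈ K, ∃ v, (linkGraph E k).Adj u v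
    · obtain ⟨k, hk, v, huv⟩ := h
      exact card_chargedEdges_le_four_of_linkGraph_adj hE hK hk huK huv
    · push Not at h
      exact (card_chargedEdges_le_card_of_not_linkGraph_adj hE huK h).trans hK4
  calc #{e ∈ E | ¬ Disjoint K e} ≤ #K.powerset + #((V \ K).biUnion (chargedEdges E K)) :=
        (card_le_card hcover).trans (card_union_le _ _)
    _ ≤ 2 ^ #K + #(V \ K) * 4 :=
        add_le_add (card_powerset K).le (card_biUnion_le_card_mul _ _ _ card_chargedEdges_le_four)

end LinkTriangles

section Bound

variable {α : Type*} [DecidableEq α] {E : Finset (Finset α)}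

lemma IsComplex.filter_disjoint (hE : IsComplex E) (K : Finset α) :
    IsComplex {e ∈ E | Disjoint K e} := fun e he f hf =>
  have ⟨heE, hKe⟩ := mem_filter.1 he
  mem_filter.2 ⟨hE e heE f hf, disjoint_of_subset_right hf hKe⟩

lemma exists_isDetached_card_eq_four (hE : IsComplex E) (hB : ¬ HasCopy B E) {V : Finset α}
    (hV : ∀ e ∈ E, e ⊆ V) (h : ∃ y, ¬ (linkGraph E y).CliqueFree 3) :
    ∃ K ⊆ V, #K = 4 ∧ IsDetached E K := by
  obtain ⟨a, ha⟩ := h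
  obtain ⟨T, hT⟩ := not_forall_not.1 ha
  have mem_V {x : α} (hx : x ∈ T) : a ∈ V ∧ x ∈ V ∧ x ≠ a := by
    obtain ⟨z, hz, hzx, -⟩ := exists_mem_ne_ne_of_isNClique_three hT x x
    have hadj := hT.isClique hx hz hzx.symm
    exact ⟨hV _ hadj.2.2.2 (by simp), hV _ hadj.2.2.2 (by simp), hadj.1.symm⟩
  obtain ⟨x, hx⟩ := card_pos.1 (by simp [hT.card_eq] : 0 < #T)
  have haT : a ∉ T := fun haT => (mem_V haT).2.2 rfl
  exact ⟨insert a T, insert_subset (mem_V hx).1 fun z hz => (mem_V hz).2.1,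
    by rw [card_insert_of_notMem haT, hT.card_eq], isDetached_insert_of_isNClique_three hE hB hT⟩

theorem card_le_of_not_hasCopy_B {V : Finset α} (hE : IsComplex E) (hB : ¬ HasCopy B E)
    (hV : ∀ e ∈ E, e ⊆ V) : (#E : ℝ) ≤ 9 / 16 * (#V : ℝ) ^ 2 + 3 / 4 * #V + 2 ^ 11 := by
  induction V using Finset.strongInduction generalizing E with
  | H V ih =>
    by_cases hfree : ∀ y, (linkGraph E y).CliqueFree 3
    · linarith [card_le_of_linkGraph_cliqueFree hE hB hfree hV]
    obtain ⟨K, hKV, hK4, hK⟩ := exists_isDetached_card_eq_four hE hB hV (not_forall.1 hfree)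
    rcases lt_or_ge (#V) 12 with hV12 | hV12
    · have hpow : #E ≤ 2 ^ 11 := calc
        #E ≤ #V.powerset := card_le_card fun e he => mem_powerset.2 (hV e he)
        _ = 2 ^ #V := card_powerset V
        _ ≤ 2 ^ 11 := Nat.pow_le_pow_right two_pos (Nat.le_of_lt_succ hV12)
      have hpow' : (#E : ℝ) ≤ 2 ^ 11 := by exact_mod_cast hpow
      exact hpow'.trans (le_add_of_nonneg_left (by positivity))
    · have hrest := ih (V \ K) (sdiff_ssubset hKV (card_pos.1 (by omega)))
        (hE.filter_disjoint K) (fun h => hB (h.mono (filter_subset _ _)))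
        fun e he => subset_sdiff.2 ⟨hV e (mem_filter.1 he).1, (mem_filter.1 he).2.symm⟩
      have hmeet := card_filter_not_disjoint_le hE hB hV hK hK4.le
      have hsplit := card_filter_add_card_filter_not (s := E) (Disjoint K ·)
      have hcard : #(V \ K) + 4 = #V := hK4 ▸ card_sdiff_add_card_eq_card hKV
      rw [hK4] at hmeet
      rify at hrest hmeet hsplit hcard hV12
      rw [← hcard] at hV12 ⊢
      nlinarith

lemma exSC_le_of_forall_card_le {β : Type*} {n : ℕ} {F : Finset (Finset β)} {x : ℝ} (hx : 0 ≤ x)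
    (h : ∀ E : Finset (Finset (Fin n)), IsComplex E → ¬ HasCopy F E → (#E : ℝ) ≤ x) :
    (exSC n F : ℝ) ≤ x := by
  refine (Nat.le_floor_iff hx).1 (csSup_le' ?_)
  rintro m ⟨E, hE, hF, rfl⟩
  exact Nat.le_floor (h E hE hF)

end Bound

theorem statement1 : ∃ C : ℕ, ∀ n : ℕ, 5 ≤ n →
    (exSC n B : ℝ) ≤ 9 / 8 * (n.choose 2 : ℝ) + 21 / 16 * (n : ℝ) + (C : ℝ) := by
  refine ⟨2 ^ 11, fun n _ => ?_⟩
  have hbound : (9 / 8 * (n.choose 2 : ℝ) + 21 / 16 * n + (2 ^ 11 : ℕ)) =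
      9 / 16 * (n : ℝ) ^ 2 + 3 / 4 * n + 2 ^ 11 := by
    rw [Nat.cast_choose_two]
    push_cast
    ring
  rw [hbound]
  refine exSC_le_of_forall_card_le (by positivity) fun E hE hB => ?_
  simpa using card_le_of_not_hasCopy_B hE hB (V := univ) fun e _ => subset_univ e
end

section
/- Let F be a proper 3-uniform hypergraph, let A ⊆ V(F) be nonempty, and let η, ε > 0. Then there is n0 ∈ ℕ such that the following holds for every n ≥ n0. If H is a simplicial complex on n vertices all of whose edges have size at most 3 which satisfies ex^(3)(n,F)/n² + 1 ≥ ((|A|−1)/|A| + η)·(1 + Δ^(3)/2) and e(H) ≥ (1+ε)·(ex^(3)(n,F) + binom(n,2)), then H contains a copy of F^+. -/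
open Finset

/-- `d^(i)(xy)`: number of `i`-edges containing both `x` and `y` -/
def degPair {V : Type*} [DecidableEq V] (E : Finset (Finset V)) (i : ℕ) (x y : V) : ℕ :=
  (E.filter (fun e => e.card = i ∧ x ∈ e ∧ y ∈ e)).card

/-- `Δ^(i)`: maximum of `d^(i)(xy)` over pairs of distinct vertices -/
def maxPairDeg {V : Type*} [DecidableEq V] [Fintype V]
    (E : Finset (Finset V)) (i : ℕ) : ℕ :=
  (Finset.univ : Finset V).offDiag.sup (fun p => degPair E i p.1 p.2)

/-- a 3-uniform hypergraph `F` is proper -/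
def IsProper {α : Type*} (F : Finset (Finset α)) : Prop :=
  ∀ ε : ℝ, 0 < ε → ∃ n0 : ℕ, ∀ n : ℕ, n0 ≤ n →
    (1 + ε) * ((exUnif 3 n F : ℝ) - (exUnif 3 (n - 1) F : ℝ)) ≥ (exUnif 3 n F : ℝ) / n

/-- `F⁺`: downward closure of `F` together with a new vertex (`none`) joined by
2-edges to every vertex of `A` -/
def Fplus {α : Type*} [DecidableEq α] (F : Finset (Finset α)) (A : Finset α) :
    Finset (Finset (Option α)) :=
  dClosure ((F.image (Finset.image Option.some)) ∪
    A.image (fun x => ({Option.none, Option.some x} : Finset (Option α))))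

/-!
Put `X = ex⁽³⁾(n, F)` and `K = X / n² + 1`. Starting from `H`, repeatedly delete a vertex which,
at a moment when `k` vertices are left, lies in at most `K * k + 1` edges. Reaching `m` vertices
costs about `(X / n² + 1) * (n² - m²) / 2` edges. As `X - X * (n² - m²) / (2 * n²) ≥ X * m / n` by
AM-GM and properness says that `ex⁽³⁾(m, F)` is essentially at most `X * m / n`, the surplus `ε`
leaves more than `ex⁽³⁾(m, F)` triples; in particular the process stops, at a large set `S` that
contains a copy of `F`.

Every `x ∈ S` then lies in more than `K * |S| + 1` edges inside `S`. Triples at `x` can be counted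
through the neighbours of `x`, each of which accounts for at most `Δ⁽³⁾` of them, so `x` has at
least `K * |S| / (1 + Δ⁽³⁾ / 2) ≥ ((|A| - 1) / |A| + η) * |S|` neighbours in `S`. Hence the
vertices of the copy of `A` have at least `η * |S|` common neighbours, and one of them lies
outside the copy of `F`.
-/

section ExtremalNumbers

variable {α : Type*} {F : Finset (Finset α)} {k : ℕ}

theorem card_le_exUnif {n : ℕ} {G : Finset (Finset (Fin n))} (hG : ∀ e ∈ G, #e = k)
    (hfree : ¬ HasCopy F G) : #G ≤ exUnif k n F := by
  refine le_csSup ⟨Fintype.card (Finset (Fin n)), ?_⟩ ⟨G, hG, hfree, rfl⟩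
  rintro _ ⟨E, -, -, rfl⟩
  exact card_le_univ E

theorem exists_injective_of_exUnif_lt_card {V : Type*} [DecidableEq V] {S : Finset V}
    {G : Finset (Finset V)} (hunif : ∀ e ∈ G, #e = k) (hsub : ∀ e ∈ G, e ⊆ S)
    (hcard : exUnif k #S F < #G) :
    ∃ f : α → V, Function.Injective f ∧ (∀ x, f x ∈ S) ∧ ∀ e ∈ F, e.image f ∈ G := by
  let φ : Fin #S ↪ V := S.equivFin.symm.toEmbedding.trans (Function.Embedding.subtype _)
  have hφ : univ.map φ = S := by
    rw [← map_map, map_univ_equiv, univ_eq_attach, attach_map_val]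
  obtain ⟨G', -, rfl⟩ : ∃ G' ⊆ univ, G = G'.map (mapEmbedding φ).toEmbedding := by
    refine subset_map_iff.1 fun e he => ?_
    obtain ⟨u, -, rfl⟩ := subset_map_iff.1 (hφ.symm ▸ hsub e he)
    exact mem_map_of_mem _ (mem_univ u)
  have hcopy : HasCopy F G' := by
    by_contra hfree
    have hunif' : ∀ e ∈ G', #e = k := fun e he => by
      simpa using hunif _ (mem_map_of_mem _ he)
    exact (card_le_exUnif hunif' hfree).not_gt (by simpa using hcard)
  obtain ⟨g, hg, hgF⟩ := hcopy
  refine ⟨φ ∘ g, φ.injective.comp hg, fun x => (S.equivFin.symm (g x)).2, fun e he => ?_⟩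
  rw [← image_image, ← map_eq_image]
  exact mem_map_of_mem _ (hgF e he)

/-- The growth condition says that `m ↦ g m / (m + δ * n)` is nondecreasing up to `n`. -/
theorem le_mul_of_div_le_increment {g : ℕ → ℝ} (hg : ∀ m, 0 ≤ g m) {δ : ℝ} (hδ : 0 ≤ δ) {n₀ : ℕ}
    (hgrowth : ∀ m ≥ n₀, g m / m ≤ (1 + δ) * (g m - g (m - 1))) {m n : ℕ} (hm : n₀ ≤ m)
    (hmn : m ≤ n) : g m * ((1 + δ) * n) ≤ g n * (m + δ * n) := by
  induction hmn using Nat.decreasingInduction with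
  | self => exact le_of_eq (by ring)
  | of_succ j hjn ih =>
    have ih := ih (hm.trans j.le_succ)
    have hgrowth := hgrowth (j + 1) (hm.trans j.le_succ)
    have hjn' : (j : ℝ) + 1 ≤ n := mod_cast hjn
    have hj : (0 : ℝ) < j + 1 := by positivity
    rw [Nat.add_sub_cancel, Nat.cast_add_one, div_le_iff₀ hj] at hgrowth
    rw [Nat.cast_add_one] at ih
    have hpos : 0 < j + 1 + δ * n := by positivity
    have hstep : g j * (j + 1 + δ * n) ≤ g (j + 1) * (j + δ * n) := by
      have hincr : 0 ≤ g (j + 1) - g j :=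
        nonneg_of_mul_nonneg_right ((hg _).trans (hgrowth.trans_eq (by ring)))
          (by positivity : 0 < (1 + δ) * ((j : ℝ) + 1))
      have hfactor : (1 + δ) * (j + 1) ≤ j + 1 + δ * n := by
        linarith [mul_le_mul_of_nonneg_left hjn' hδ]
      linarith [mul_le_mul_of_nonneg_right hfactor hincr]
    refine le_of_mul_le_mul_right ?_ hpos
    calc g j * ((1 + δ) * n) * (j + 1 + δ * n)
        = g j * (j + 1 + δ * n) * ((1 + δ) * n) := by ring
      _ ≤ g (j + 1) * (j + δ * n) * ((1 + δ) * n) := by gcongr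
      _ = g (j + 1) * ((1 + δ) * n) * (j + δ * n) := by ring
      _ ≤ g n * (j + 1 + δ * n) * (j + δ * n) := by gcongr
      _ = g n * (j + δ * n) * (j + 1 + δ * n) := by ring

theorem IsProper.exists_forall_exUnif_le (hF : IsProper F) {δ : ℝ} (hδ : 0 < δ) :
    ∃ n₀ : ℕ, ∀ m ≥ n₀, ∀ n ≥ m, (exUnif 3 m F : ℝ) ≤ exUnif 3 n F * (m / n + δ) := by
  obtain ⟨n₀, hn₀⟩ := hF δ hδ
  refine ⟨n₀ + 1, fun m hm n hmn => ?_⟩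
  have hn : (0 : ℝ) < n := by exact_mod_cast (by omega : 0 < n)
  have hbound := le_mul_of_div_le_increment (g := fun m => (exUnif 3 m F : ℝ))
    (fun _ => by positivity) hδ.le hn₀ (by omega) hmn
  refine le_of_mul_le_mul_right (hbound.trans ?_) (by positivity : 0 < (1 + δ) * (n : ℝ))
  rw [mul_assoc]
  gcongr
  have : (m / n + δ) * ((1 + δ) * n) = m + δ * n + δ * (m + δ * n) := by field_simp
  rw [this]
  exact le_add_of_nonneg_right (by positivity)

end ExtremalNumbers

section Degrees

variable {V : Type*} [DecidableEq V]

/-- The subcomplex induced by the vertex set `S`, as a set of edges on the same vertex type. -/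
def inducedEdges (E : Finset (Finset V)) (S : Finset V) : Finset (Finset V) := {e ∈ E | e ⊆ S}

/-- The degree of a vertex, counting edges of every size, the `1`-edge `{x}` included. -/
def vertexDegree (E : Finset (Finset V)) (x : V) : ℕ := #{e ∈ E | x ∈ e}

/-- The neighbourhood of a vertex in the graph formed by the `2`-edges. -/
def neighbors [Fintype V] (E : Finset (Finset V)) (x : V) : Finset V := {y | y ≠ x ∧ {x, y} ∈ E}

theorem mem_inducedEdges {E : Finset (Finset V)} {S e : Finset V} :
    e ∈ inducedEdges E S ↔ e ∈ E ∧ e ⊆ S := mem_filter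

theorem mem_neighbors [Fintype V] {E : Finset (Finset V)} {x y : V} :
    y ∈ neighbors E x ↔ y ≠ x ∧ {x, y} ∈ E := by simp [neighbors]

theorem inducedEdges_subset (E : Finset (Finset V)) (S : Finset V) : inducedEdges E S ⊆ E :=
  filter_subset _ _

theorem inducedEdges_univ [Fintype V] (E : Finset (Finset V)) : inducedEdges E univ = E := by
  simp [inducedEdges]

theorem IsComplex.inducedEdges {E : Finset (Finset V)} (hE : IsComplex E) (S : Finset V) :
    IsComplex (inducedEdges E S) := fun e he f hf =>
  have ⟨heE, heS⟩ := mem_inducedEdges.1 he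
  mem_inducedEdges.2 ⟨hE e heE f hf, hf.trans heS⟩

theorem card_inducedEdges_le_two_pow (E : Finset (Finset V)) (S : Finset V) :
    #(inducedEdges E S) ≤ 2 ^ #S := by
  rw [← card_powerset]
  exact card_le_card fun e he => mem_powerset.2 (mem_inducedEdges.1 he).2

theorem card_inducedEdges_eq_vertexDegree_add (E : Finset (Finset V)) (S : Finset V) (x : V) :
    #(inducedEdges E S) =
      vertexDegree (inducedEdges E S) x + #(inducedEdges E (S.erase x)) := by
  have herase : inducedEdges E (S.erase x) = {e ∈ inducedEdges E S | x ∉ e} := by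
    ext e
    simp only [inducedEdges, mem_filter, subset_erase, and_assoc]
  rw [herase, vertexDegree, card_filter_add_card_filter_not]

theorem neighbors_inducedEdges_subset [Fintype V] (E : Finset (Finset V)) (S : Finset V) (x : V) :
    neighbors (inducedEdges E S) x ⊆ S := fun y hy =>
  (mem_inducedEdges.1 (mem_neighbors.1 hy).2).2 (by simp)

theorem degPair_le_maxPairDeg [Fintype V] (E : Finset (Finset V)) (i : ℕ) {x y : V}
    (hxy : x ≠ y) : degPair E i x y ≤ maxPairDeg E i :=
  le_sup (f := fun p : V × V => degPair E i p.1 p.2) (b := (x, y)) (by simpa using hxy)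

theorem maxPairDeg_mono [Fintype V] {E E' : Finset (Finset V)} (h : E ⊆ E') (i : ℕ) :
    maxPairDeg E i ≤ maxPairDeg E' i :=
  sup_mono_fun fun _ _ => card_le_card (filter_subset_filter _ h)

theorem card_inducedEdges_le {E : Finset (Finset V)} (h3 : ∀ e ∈ E, #e ≤ 3) (S : Finset V) :
    #(inducedEdges E S) ≤ 1 + #S + (#S).choose 2 + #{e ∈ inducedEdges E S | #e = 3} := by
  have hcover : inducedEdges E S ⊆ ((S.powersetCard 0 ∪ S.powersetCard 1) ∪ S.powersetCard 2) ∪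
      {e ∈ inducedEdges E S | #e = 3} := by
    intro e he
    obtain ⟨heE, heS⟩ := mem_inducedEdges.1 he
    have := h3 e heE
    simp only [mem_union, mem_powersetCard, mem_filter, he, heS, true_and]
    omega
  calc #(inducedEdges E S)
      ≤ #(S.powersetCard 0) + #(S.powersetCard 1) + #(S.powersetCard 2) +
          #{e ∈ inducedEdges E S | #e = 3} :=
        (card_le_card hcover).trans <| (card_union_le _ _).trans <| Nat.add_le_add_right
          ((card_union_le _ _).trans <| Nat.add_le_add_right (card_union_le _ _) _) _
    _ = _ := by simp only [card_powersetCard, Nat.choose_zero_right, Nat.choose_one_right]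

variable [Fintype V] {E : Finset (Finset V)}

theorem card_edges_of_card_three_mul_two_le (hE : IsComplex E) (x : V) :
    #{e ∈ E | x ∈ e ∧ #e = 3} * 2 ≤ #(neighbors E x) * maxPairDeg E 3 := by
  refine card_mul_le_card_mul (fun e y => y ∈ e) (fun e he => ?_) (fun y hy => ?_)
  · obtain ⟨heE, hxe, hcard⟩ := mem_filter.1 he
    have herase : e.erase x ⊆ bipartiteAbove (fun e y => y ∈ e) (neighbors E x) e := by
      intro y hy
      obtain ⟨hyx, hye⟩ := mem_erase.1 hy
      exact (mem_bipartiteAbove _).2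
        ⟨mem_neighbors.2 ⟨hyx, hE e heE _ (insert_subset hxe (singleton_subset_iff.2 hye))⟩, hye⟩
    calc 2 = #(e.erase x) := by rw [card_erase_of_mem hxe, hcard]
      _ ≤ _ := card_le_card herase
  · refine (card_le_card fun e he => ?_).trans
      (degPair_le_maxPairDeg E 3 (mem_neighbors.1 hy).1.symm)
    obtain ⟨he, hye⟩ := mem_bipartiteBelow _ |>.1 he
    obtain ⟨heE, hxe, hcard⟩ := mem_filter.1 he
    exact mem_filter.2 ⟨heE, hcard, hxe, hye⟩

theorem vertexDegree_le (h3 : ∀ e ∈ E, #e ≤ 3) (x : V) :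
    vertexDegree E x ≤ 1 + #(neighbors E x) + #{e ∈ E | x ∈ e ∧ #e = 3} := by
  have hcover : {e ∈ E | x ∈ e} ⊆
      ({{x}} ∪ (neighbors E x).image fun y => {x, y}) ∪ {e ∈ E | x ∈ e ∧ #e = 3} := by
    intro e he
    obtain ⟨heE, hxe⟩ := mem_filter.1 he
    simp only [mem_union, mem_singleton, mem_image, mem_filter, mem_neighbors]
    have hpos : 0 < #e := card_pos.2 ⟨x, hxe⟩
    obtain hcard | hcard | hcard : #e = 1 ∨ #e = 2 ∨ #e = 3 := by have := h3 e heE; omega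
    · obtain ⟨z, rfl⟩ := card_eq_one.1 hcard
      exact .inl (.inl (by rw [mem_singleton.1 hxe]))
    · obtain ⟨y, hy⟩ : ∃ y, e.erase x = {y} := by
        rw [← card_eq_one, card_erase_of_mem hxe, hcard]
      have hxy : {x, y} = e := by rw [← hy, insert_erase hxe]
      have hyx : y ≠ x := ne_of_mem_erase (hy ▸ mem_singleton_self y)
      exact .inl (.inr ⟨y, ⟨hyx, hxy ▸ heE⟩, hxy⟩)
    · exact .inr ⟨heE, hxe, hcard⟩
  calc vertexDegree E x
      ≤ #{{x}} + #((neighbors E x).image fun y => ({x, y} : Finset V)) +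
          #{e ∈ E | x ∈ e ∧ #e = 3} :=
        (card_le_card hcover).trans <| (card_union_le _ _).trans <|
          Nat.add_le_add_right (card_union_le _ _) _
    _ ≤ _ := by rw [card_singleton]; gcongr; exact card_image_le

theorem vertexDegree_le_card_neighbors_mul (hE : IsComplex E) (h3 : ∀ e ∈ E, #e ≤ 3) (x : V) :
    (vertexDegree E x : ℝ) ≤ 1 + #(neighbors E x) * (1 + (maxPairDeg E 3 : ℝ) / 2) := by
  have hdeg : (vertexDegree E x : ℝ) ≤
      1 + #(neighbors E x) + (#{e ∈ E | x ∈ e ∧ #e = 3} : ℝ) := mod_cast vertexDegree_le h3 x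
  have htriples : (#{e ∈ E | x ∈ e ∧ #e = 3} * 2 : ℝ) ≤ #(neighbors E x) * maxPairDeg E 3 :=
    mod_cast card_edges_of_card_three_mul_two_le hE x
  linarith

theorem mul_card_le_card_neighbors_inducedEdges (hE : IsComplex E) (h3 : ∀ e ∈ E, #e ≤ 3)
    {c K : ℝ} (hc : c * (1 + (maxPairDeg E 3 : ℝ) / 2) ≤ K) {S : Finset V} {x : V}
    (hdeg : K * #S + 1 < vertexDegree (inducedEdges E S) x) :
    c * #S ≤ #(neighbors (inducedEdges E S) x) := by
  have hbound := vertexDegree_le_card_neighbors_mul (hE.inducedEdges S)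
    (fun e he => h3 e (inducedEdges_subset E S he)) x
  have hmono : (maxPairDeg (inducedEdges E S) 3 : ℝ) ≤ maxPairDeg E 3 :=
    mod_cast maxPairDeg_mono (inducedEdges_subset E S) 3
  refine le_of_mul_le_mul_right ?_ (by positivity : 0 < 1 + (maxPairDeg E 3 : ℝ) / 2)
  calc c * #S * (1 + (maxPairDeg E 3 : ℝ) / 2)
      = c * (1 + (maxPairDeg E 3 : ℝ) / 2) * #S := by ring
    _ ≤ K * #S := by gcongr
    _ ≤ #(neighbors (inducedEdges E S) x) *
          (1 + (maxPairDeg (inducedEdges E S) 3 : ℝ) / 2) := by linarith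
    _ ≤ _ := by gcongr

end Degrees

section Deletion

variable {V : Type*} [DecidableEq V]

theorem exists_subset_forall_lt_vertexDegree (E : Finset (Finset V)) (L : ℕ → ℝ) {S₀ : Finset V}
    (hS₀ : L #S₀ ≤ #(inducedEdges E S₀)) :
    ∃ S ⊆ S₀, L #S ≤ #(inducedEdges E S) ∧
      ∀ x ∈ S, L #S - L (#S - 1) < vertexDegree (inducedEdges E S) x := by
  obtain ⟨S, hSS₀, hS⟩ := exists_minimal_le_of_wellFoundedLT
    (fun S : Finset V => L #S ≤ #(inducedEdges E S)) S₀ hS₀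
  refine ⟨S, hSS₀, hS.prop, fun x hx => ?_⟩
  have herase : (#(inducedEdges E (S.erase x)) : ℝ) < L (#S - 1) := by
    simpa [card_erase_of_mem hx] using hS.not_prop_of_lt (erase_ssubset hx)
  have hsplit : (#(inducedEdges E S) : ℝ) =
      vertexDegree (inducedEdges E S) x + #(inducedEdges E (S.erase x)) :=
    mod_cast card_inducedEdges_eq_vertexDegree_add E S x
  linarith [hS.prop]

/-- The number of edges, out of `e`, that remain when the vertices of an `n`-vertex complex are
deleted one at a time until `m` are left and the deletion of one among `k` vertices destroys
`K * k + 1` edges. -/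
noncomputable def deletionThreshold (e K n m : ℝ) : ℝ :=
  e - K * ((n * (n + 1) - m * (m + 1)) / 2) - (n - m)

theorem deletionThreshold_self (e K n : ℝ) : deletionThreshold e K n n = e := by
  simp [deletionThreshold]

theorem deletionThreshold_sub_pred (e K n m : ℝ) :
    deletionThreshold e K n m - deletionThreshold e K n (m - 1) = K * m + 1 := by
  simp only [deletionThreshold]
  ring

theorem le_deletionThreshold {X ε n m : ℝ} (hX : 0 ≤ X) (hε : 0 < ε) (hm : 0 ≤ m)
    (hn : 1 ≤ n) (hεn : 6 ≤ ε * (n - 1)) :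
    X * (m / n + ε / 2) + m * (m - 1) / 2 + m + n ≤
      deletionThreshold ((1 + ε) * (X + n * (n - 1) / 2)) (X / n ^ 2 + 1) n m := by
  have hcoeff : m / n + ε / 2 ≤ 1 + ε - (n * (n + 1) - m * (m + 1)) / 2 / n ^ 2 := by
    rw [← sub_nonneg]
    have hsq : 1 + ε - (n * (n + 1) - m * (m + 1)) / 2 / n ^ 2 - (m / n + ε / 2) =
        ((n - m) ^ 2 + n * (ε * n - 1) + m) / (2 * n ^ 2) := by
      field_simp
      ring
    have : 0 ≤ ε * n - 1 := by linarith
    rw [hsq]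
    positivity
  have hX' := mul_le_mul_of_nonneg_left hcoeff hX
  have hn' := mul_le_mul_of_nonneg_left hεn (by linarith : 0 ≤ n)
  have hexpand : deletionThreshold ((1 + ε) * (X + n * (n - 1) / 2)) (X / n ^ 2 + 1) n m =
      X * (1 + ε - (n * (n + 1) - m * (m + 1)) / 2 / n ^ 2) + n * (ε * (n - 1)) / 2 +
        m * (m - 1) / 2 + 2 * (m - n) := by
    simp only [deletionThreshold]
    ring
  linarith

theorem exists_large_minDegree_subset [Fintype V] {E : Finset (Finset V)} {X ε : ℝ} (hX : 0 ≤ X)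
    (hε : 0 < ε) (hn : 6 ≤ ε * ((Fintype.card V : ℝ) - 1))
    (hcard : (1 + ε) * (X + (Fintype.card V).choose 2) ≤ #E) :
    ∃ S : Finset V,
      X * (#S / Fintype.card V + ε / 2) + (#S).choose 2 + #S + Fintype.card V ≤
          #(inducedEdges E S) ∧
        ∀ x ∈ S, (X / (Fintype.card V : ℝ) ^ 2 + 1) * #S + 1 <
          vertexDegree (inducedEdges E S) x := by
  set n : ℝ := (Fintype.card V : ℝ) with hn_def
  have hn1 : 1 ≤ n := by
    have := pos_of_mul_pos_right (by linarith : 0 < ε * (n - 1)) hε.le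
    linarith
  rw [Nat.cast_choose_two] at hcard
  obtain ⟨S, -, hS, hdeg⟩ := exists_subset_forall_lt_vertexDegree E
    (fun m => deletionThreshold ((1 + ε) * (X + n * (n - 1) / 2)) (X / n ^ 2 + 1) n m)
    (S₀ := univ) (by rwa [card_univ, ← hn_def, deletionThreshold_self, inducedEdges_univ])
  refine ⟨S, ?_, fun x hx => ?_⟩
  · rw [Nat.cast_choose_two]
    exact (le_deletionThreshold hX hε (by positivity) hn1 hn).trans hS
  · have := hdeg x hx
    rwa [Nat.cast_pred (card_pos.2 ⟨x, hx⟩), deletionThreshold_sub_pred] at this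

end Deletion

section Embedding

theorem exists_notMem_forall_mem_of_card {ι V : Type*} {A : Finset ι} (hA : A.Nonempty)
    {N : ι → Finset V} {S B : Finset V} {η : ℝ} (hNS : ∀ i ∈ A, N i ⊆ S)
    (hN : ∀ i ∈ A, (((#A : ℝ) - 1) / #A + η) * #S ≤ #(N i)) (hB : #B < η * #S) :
    ∃ b ∉ B, ∀ i ∈ A, b ∈ N i := by
  classical
  have hA1 : (1 : ℝ) ≤ #A := mod_cast hA.card_pos
  have hmissing : ∀ i ∈ A, (#(S \ N i) : ℝ) ≤ (1 / #A - η) * #S := by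
    intro i hi
    have hN := hN i hi
    have : ((#A : ℝ) - 1) / #A = 1 - 1 / #A := by field_simp
    rw [this] at hN
    rw [cast_card_sdiff (hNS i hi)]
    linarith
  have hbad : (#(A.biUnion (fun i => S \ N i) ∪ B) : ℝ) < #S := by
    calc (#(A.biUnion (fun i => S \ N i) ∪ B) : ℝ)
        ≤ ∑ i ∈ A, (#(S \ N i) : ℝ) + #B :=
          mod_cast (card_union_le _ _).trans (Nat.add_le_add_right card_biUnion_le _)
      _ ≤ ∑ _i ∈ A, (1 / (#A : ℝ) - η) * #S + #B := by gcongr with i hi; exact hmissing i hi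
      _ = #S - #A * (η * #S) + #B := by rw [sum_const, nsmul_eq_mul]; field_simp
      _ < #S := by
        have : η * #S ≤ #A * (η * #S) :=
          le_mul_of_one_le_left ((Nat.cast_nonneg _).trans hB.le) hA1
        linarith
  obtain ⟨b, hbS, hb⟩ := exists_mem_notMem_of_card_lt_card (Nat.cast_lt.1 hbad)
  simp only [mem_union, mem_biUnion, mem_sdiff, not_or, not_exists, not_and, not_not] at hb
  exact ⟨b, hb.2, fun i hi => hb.1 i hi hbS⟩

variable {V : Type*} [DecidableEq V] {E : Finset (Finset V)}
  {α : Type*} [DecidableEq α] {F : Finset (Finset α)} {A : Finset α}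

theorem IsComplex.hasCopy_Fplus (hE : IsComplex E) {f : α → V} (hf : Function.Injective f)
    (hF : ∀ e ∈ F, e.image f ∈ E) {b : V} (hb : b ∉ Set.range f)
    (hbA : ∀ x ∈ A, {f x, b} ∈ E) : HasCopy (Fplus F A) E := by
  refine ⟨fun o => o.elim b f, Option.injective_iff.2 ⟨hf, hb⟩, fun e he => ?_⟩
  simp only [Fplus, dClosure, mem_biUnion, mem_union, mem_image, mem_powerset] at he
  obtain ⟨_, ⟨c, hc, rfl⟩ | ⟨x, hx, rfl⟩, hed⟩ := he
  all_goals refine hE _ ?_ _ (image_subset_image hed)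
  · rw [image_image]
    exact hF c hc
  · rw [pair_comm, image_insert, image_singleton]
    exact hbA x hx

variable [Fintype V]

theorem hasCopy_Fplus_of_le_card (hA : A.Nonempty) {η ε : ℝ} (hε : 0 < ε)
    (hn : 6 ≤ ε * ((Fintype.card V : ℝ) - 1))
    (hgrowth : ∀ m ≤ Fintype.card V, Fintype.card V ≤ 2 ^ m →
      (exUnif 3 m F : ℝ) ≤ exUnif 3 (Fintype.card V) F * (m / Fintype.card V + ε / 2))
    (hα : ∀ m : ℕ, Fintype.card V ≤ 2 ^ m → Nat.card α < η * m)
    (hE : IsComplex E) (h3 : ∀ e ∈ E, #e ≤ 3)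
    (hΔ : (((#A : ℝ) - 1) / #A + η) * (1 + (maxPairDeg E 3 : ℝ) / 2) ≤
      (exUnif 3 (Fintype.card V) F : ℝ) / (Fintype.card V : ℝ) ^ 2 + 1)
    (hcard : (1 + ε) * ((exUnif 3 (Fintype.card V) F : ℝ) + (Fintype.card V).choose 2) ≤ #E) :
    HasCopy (Fplus F A) E := by
  obtain ⟨S, hS, hdeg⟩ := exists_large_minDegree_subset (Nat.cast_nonneg _) hε hn hcard
  have hV : (1 : ℝ) < Fintype.card V := by
    have := pos_of_mul_pos_right (by linarith : 0 < ε * ((Fintype.card V : ℝ) - 1)) hε.le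
    linarith
  have hSlarge : Fintype.card V ≤ 2 ^ #S := by
    have : (Fintype.card V : ℝ) ≤ #(inducedEdges E S) :=
      (le_add_of_nonneg_left (by positivity)).trans hS
    exact (Nat.cast_le.1 this).trans (card_inducedEdges_le_two_pow E S)
  have htriples : exUnif 3 #S F < #{e ∈ inducedEdges E S | #e = 3} := by
    have hsmall : (#(inducedEdges E S) : ℝ) ≤
        1 + #S + (#S).choose 2 + #{e ∈ inducedEdges E S | #e = 3} :=
      mod_cast card_inducedEdges_le h3 S
    have hexS := hgrowth #S (card_le_univ S) hSlarge
    exact Nat.cast_lt (α := ℝ) |>.1 (by linarith)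
  obtain ⟨f, hf, hfS, hfF⟩ := exists_injective_of_exUnif_lt_card (F := F)
    (fun e he => (mem_filter.1 he).2)
    (fun e he => (mem_inducedEdges.1 (mem_filter.1 he).1).2) htriples
  have : Finite α := Finite.of_injective f hf
  have : Fintype α := Fintype.ofFinite α
  have hfα : (#(univ.image f) : ℝ) < η * #S := by
    rw [card_image_of_injective _ hf, card_univ, ← Nat.card_eq_fintype_card]
    exact hα #S hSlarge
  obtain ⟨b, hb, hbA⟩ := exists_notMem_forall_mem_of_card hA
    (fun x _ => neighbors_inducedEdges_subset E S (f x))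
    (fun x _ => mul_card_le_card_neighbors_inducedEdges hE h3 hΔ (hdeg (f x) (hfS x))) hfα
  refine hE.hasCopy_Fplus hf
    (fun e he => inducedEdges_subset E S (mem_filter.1 (hfF e he)).1) (by simpa using hb)
    fun x hx => inducedEdges_subset E S (mem_neighbors.1 (hbA x hx)).2

end Embedding

theorem statement4_general {α : Type*} [DecidableEq α] {F : Finset (Finset α)}
    (hproper : IsProper F) {A : Finset α} (hA : A.Nonempty) {η ε : ℝ} (hη : 0 < η) (hε : 0 < ε) :
    ∃ n₀ : ℕ, ∀ {V : Type*} [Fintype V] [DecidableEq V], n₀ ≤ Fintype.card V →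
      ∀ E : Finset (Finset V), IsComplex E → (∀ e ∈ E, #e ≤ 3) →
        (((#A : ℝ) - 1) / #A + η) * (1 + (maxPairDeg E 3 : ℝ) / 2) ≤
          (exUnif 3 (Fintype.card V) F : ℝ) / (Fintype.card V : ℝ) ^ 2 + 1 →
        (1 + ε) * ((exUnif 3 (Fintype.card V) F : ℝ) + (Fintype.card V).choose 2) ≤ #E →
        HasCopy (Fplus F A) E := by
  obtain ⟨m₁, hm₁⟩ := hproper.exists_forall_exUnif_le (half_pos hε)
  obtain ⟨m₂, hm₂⟩ := exists_nat_gt ((Nat.card α : ℝ) / η)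
  obtain ⟨m₃, hm₃⟩ := exists_nat_gt (6 / ε)
  refine ⟨max (2 ^ max m₁ m₂) (m₃ + 1), fun {V} _ _ hV E hE h3 hΔ hcard => ?_⟩
  have hlog : ∀ m, Fintype.card V ≤ 2 ^ m → max m₁ m₂ ≤ m := fun m hm =>
    (Nat.pow_le_pow_iff_right one_lt_two).1 ((le_of_max_le_left hV).trans hm)
  refine hasCopy_Fplus_of_le_card hA hε ?_ (fun m hmV hm => ?_) (fun m hm => ?_) hE h3 hΔ hcard
  · have hV' : (m₃ : ℝ) + 1 ≤ Fintype.card V := mod_cast le_of_max_le_right hV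
    rw [← div_le_iff₀' hε]
    linarith
  · exact hm₁ m ((le_max_left _ _).trans (hlog m hm)) _ hmV
  · rw [← div_lt_iff₀' hη]
    exact hm₂.trans_le (mod_cast (le_max_right _ _).trans (hlog m hm))

theorem statement4 {α : Type*} [DecidableEq α] (F : Finset (Finset α))
    (hunif : ∀ e ∈ F, e.card = 3) (hproper : IsProper F)
    (A : Finset α) (hA : A.Nonempty) (η ε : ℝ) (hη : 0 < η) (hε : 0 < ε) :
    ∃ n0 : ℕ, ∀ n : ℕ, n0 ≤ n → ∀ E : Finset (Finset (Fin n)),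
      IsComplex E → (∀ e ∈ E, e.card ≤ 3) →
      (exUnif 3 n F : ℝ) / (n : ℝ) ^ 2 + 1 ≥
        (((A.card : ℝ) - 1) / (A.card : ℝ) + η) * (1 + (maxPairDeg E 3 : ℝ) / 2) →
      (E.card : ℝ) ≥ (1 + ε) * ((exUnif 3 n F : ℝ) + (n.choose 2 : ℝ)) →
      HasCopy (Fplus F A) E := by
  obtain ⟨n₀, hn₀⟩ := statement4_general hproper hA hη hε
  exact ⟨n₀, fun n hn E => by simpa only [Fintype.card_fin] using hn₀ (by simpa using hn) E⟩
end
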